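/- arXiv:1905.10973 — 2 statements merged into one kernel-verified Lean document; each statement's English description precedes it below -/
import Mathlib

section
/- For all integers a, b and every integer c ≥ 0, the identity F₃(a,b,c) = F₃(a+1, b+1, c−1) + (qt)^c · F₂(a+c, b−c) + ∑_{i=0}^{c−1} (qt)^{b+2c−2i} · F₁(a−b−2c+4i) holds in the field ℚ(q,t). -/
open Finset

noncomputable section

/-- The field `ℚ(q,t)` of rational functions in two variables over `ℚ`. -/
abbrev K : Type := FractionRing (MvPolynomial (Fin 2) ℚ)

/-- The variable `q` in `ℚ(q,t)`. -/
def q : K := algebraMap (MvPolynomial (Fin 2) ℚ) K (MvPolynomial.X 0)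

/-- The variable `t` in `ℚ(q,t)`. -/
def t : K := algebraMap (MvPolynomial (Fin 2) ℚ) K (MvPolynomial.X 1)

/-- `H₂(a,b)` as a function of the two variables `x`, `y` (so that interchanging the
arguments interchanges `q` and `t`):
`H₂(a,b;x,y) = x^{a+2b}/(1 − y/x²) + x^a y^b/(1 − x²/y)`. -/
def H₂ (a b : ℤ) (x y : K) : K :=
  x ^ (a + 2 * b) / (1 - y / x ^ 2) + x ^ a * y ^ b / (1 - x ^ 2 / y)

/-- `H₃(a,b,c;x,y)`, the head-like standard-tableau expansion for `n = 4`. -/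
def H₃ (a b c : ℤ) (x y : K) : K :=
  x ^ (a + 2 * b + 3 * c) / ((1 - y / x ^ 2) * (1 - y / x ^ 3))
    + x ^ (a + 2 * b) * y ^ c / ((1 - y / x ^ 2) * (1 - x ^ 3 / y))
    + x ^ (a + 2 * c) * y ^ b * (1 - y) / ((1 - y ^ 2 / x ^ 2) * (1 - x ^ 2 / y) * (1 - y / x))
    + x ^ a * y ^ (b + 2 * c) / ((1 - x ^ 2 / y ^ 2) * (1 - x / y))
    + x ^ (a + c) * y ^ (b + c) * (1 - x) / ((1 - x ^ 2 / y) * (1 - x / y) * (1 - y / x))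

/-- `F₁(m) = (q^{m+1} − t^{m+1})/(q − t)`, the function `F(a)` of the paper. -/
def F₁ (m : ℤ) : K := (q ^ (m + 1) - t ^ (m + 1)) / (q - t)

/-- `F₂(a,b) = H₂(a,b;q,t)/(1 − t/q) + H₂(a,b;t,q)/(1 − q/t)`. -/
def F₂ (a b : ℤ) : K := H₂ a b q t / (1 - t / q) + H₂ a b t q / (1 - q / t)

/-- `F₃(a,b,c) = H₃(a,b,c;q,t)/(1 − t/q) + H₃(a,b,c;t,q)/(1 − q/t)`. -/
def F₃ (a b c : ℤ) : K := H₃ a b c q t / (1 - t / q) + H₃ a b c t q / (1 - q / t)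

/-!
Every `Fₙ` is the symmetrization over `q ↔ t` of `Hₙ`, with `H₁(m) = x^m`, and symmetrization is
linear and commutes with multiplication by powers of `q t`. The recursion already holds for the
`Hₙ`. In passing from `H₃(a,b,c)` to `H₃(a+1,b+1,c-1)` the first and the fifth summand do not
change, while each of the others is multiplied by a monomial `r` for which `1 - r` is one of the
factors of its denominator, so that in the difference this factor cancels. Subtracting
`(xy)^c H₂(a+c,b-c)` leaves a quotient with denominator `1 - (x/y)²`, which is a geometric sum.
-/

section Field

variable {F : Type*} [Field F]

theorem div_mul_one_sub_sub_mul_div {r : F} (hr : r ≠ 1) (w d : F) :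
    w / (d * (1 - r)) - w * r / (d * (1 - r)) = w / d := by
  rw [← sub_div, ← mul_one_sub, mul_div_mul_right _ _ (sub_ne_zero.mpr hr.symm)]

theorem one_sub_div_mul_sub_one_div {x y : F} (hx : x ≠ 0) (hy : y ≠ 0) (hxy₂ : x ^ 2 ≠ y)
    (hxy : x ^ 2 ≠ y ^ 2) :
    (1 - y) / ((1 - y ^ 2 / x ^ 2) * (1 - x ^ 2 / y)) - 1 / (1 - x ^ 2 / y)
      = -1 / (1 - x ^ 2 / y ^ 2) := by
  have hden₁ : 1 - x ^ 2 / y ≠ 0 := by rwa [sub_ne_zero, ne_comm, Ne, div_eq_one_iff_eq hy]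
  have hden₂ : 1 - y ^ 2 / x ^ 2 ≠ 0 := by
    rwa [sub_ne_zero, ne_comm, Ne, div_eq_one_iff_eq (pow_ne_zero 2 hx), eq_comm]
  have hden₃ : 1 - x ^ 2 / y ^ 2 ≠ 0 := by
    rwa [sub_ne_zero, ne_comm, Ne, div_eq_one_iff_eq (pow_ne_zero 2 hy)]
  have hnum : 1 - y - (1 - y ^ 2 / x ^ 2) = y ^ 2 / x ^ 2 * (1 - x ^ 2 / y) := by
    field_simp
    ring
  calc (1 - y) / ((1 - y ^ 2 / x ^ 2) * (1 - x ^ 2 / y)) - 1 / (1 - x ^ 2 / y)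
      = (1 - y - (1 - y ^ 2 / x ^ 2)) / ((1 - y ^ 2 / x ^ 2) * (1 - x ^ 2 / y)) := by
        rw [sub_div _ (1 - y ^ 2 / x ^ 2), div_mul_cancel_left₀ hden₂, one_div]
    _ = y ^ 2 / x ^ 2 / (1 - y ^ 2 / x ^ 2) := by rw [hnum, mul_div_mul_right _ _ hden₁]
    _ = -1 / (1 - x ^ 2 / y ^ 2) := by
        rw [div_eq_div_iff hden₂ hden₃]
        field_simp
        ring

theorem sum_Icc_zpow_eq {r : F} (hr : r ≠ 1) {c : ℤ} (hc : 0 ≤ c) :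
    ∑ i ∈ Icc 0 (c - 1), r ^ i = (1 - r ^ c) / (1 - r) := by
  lift c to ℕ using hc
  have hrange : Icc (0 : ℤ) (c - 1) = (range c).image (↑) := by
    rw [Icc_sub_one_right_eq_Ico, range_eq_Ico, ← coe_inj, coe_image, coe_Ico, coe_Ico,
      Nat.image_cast_int_Ico, Nat.cast_zero]
  simp [hrange, geom_sum_eq hr, ← neg_div_neg_eq (1 - r ^ c)]

theorem sum_Icc_mul_zpow_mul_zpow {x y : F} (hx : x ≠ 0) (hy : y ≠ 0) (hxy : x ^ 2 ≠ y ^ 2)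
    (a b : ℤ) {c : ℤ} (hc : 0 ≤ c) :
    ∑ i ∈ Icc 0 (c - 1), (x * y) ^ (b + 2 * c - 2 * i) * x ^ (a - b - 2 * c + 4 * i)
      = (x ^ a * y ^ (b + 2 * c) - x ^ (a + 2 * c) * y ^ b) / (1 - x ^ 2 / y ^ 2) := by
  have hmonomial (i : ℤ) : (x * y) ^ (b + 2 * c - 2 * i) * x ^ (a - b - 2 * c + 4 * i)
      = x ^ a * y ^ (b + 2 * c) * (x ^ 2 / y ^ 2) ^ i := by
    have hexp : x ^ (b + 2 * c - 2 * i) * x ^ (a - b - 2 * c + 4 * i) = x ^ a * x ^ (2 * i) := by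
      simp only [← zpow_add₀ hx]
      ring_nf
    rw [mul_zpow, mul_right_comm, hexp, zpow_sub₀ hy, div_zpow,
      ← zpow_natCast x 2, ← zpow_natCast y 2, ← zpow_mul, ← zpow_mul]
    push_cast
    ring
  have hratio : x ^ 2 / y ^ 2 ≠ 1 := by rwa [Ne, div_eq_one_iff_eq (pow_ne_zero 2 hy)]
  have hlast : x ^ a * y ^ (b + 2 * c) * (x ^ 2 / y ^ 2) ^ c = x ^ (a + 2 * c) * y ^ b := by
    rw [← hmonomial, mul_zpow, mul_right_comm, ← zpow_add₀ hx]
    ring_nf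
  simp only [hmonomial]
  rw [← mul_sum, sum_Icc_zpow_eq hratio hc, mul_div_assoc', mul_one_sub, hlast]

end Field

theorem q_ne_zero : q ≠ 0 := by simp [q]

theorem t_ne_zero : t ≠ 0 := by simp [t]

theorem q_pow_ne_t_pow {m : ℕ} (hm : m ≠ 0) (n : ℕ) : q ^ m ≠ t ^ n := by
  intro h
  have hX : (MvPolynomial.X 0 ^ m : MvPolynomial (Fin 2) ℚ) = MvPolynomial.X 1 ^ n :=
    IsFractionRing.injective _ K (by simpa only [q, t, map_pow] using h)
  simpa [hm] using congrArg (MvPolynomial.eval ![0, 1]) hX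

/-- The symmetrization `f(q,t)/(1 − t/q) + f(t,q)/(1 − q/t)` of a function `f(x,y)`, through which
`F₁`, `F₂` and `F₃` arise from their expansions. -/
def symmetrize : (K → K → K) →ₗ[K] K where
  toFun f := f q t / (1 - t / q) + f t q / (1 - q / t)
  map_add' f g := by simp only [Pi.add_apply]; ring
  map_smul' k f := by simp only [Pi.smul_apply, smul_eq_mul, RingHom.id_apply]; ring

theorem symmetrize_apply (f : K → K → K) :
    symmetrize f = f q t / (1 - t / q) + f t q / (1 - q / t) := rfl

theorem symmetrize_zpow_mul (k : ℤ) (f : K → K → K) :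
    symmetrize (fun x y ↦ (x * y) ^ k * f x y) = (q * t) ^ k * symmetrize f := by
  simp only [symmetrize_apply, mul_comm t q]
  ring

theorem F₁_eq_symmetrize (m : ℤ) : F₁ m = symmetrize fun x _ ↦ x ^ m := by
  have hq := q_ne_zero
  have ht := t_ne_zero
  have hqt : q - t ≠ 0 := sub_ne_zero.mpr (by simpa using q_pow_ne_t_pow one_ne_zero 1)
  have hq' : 1 - t / q = (q - t) / q := by field_simp
  have ht' : 1 - q / t = -((q - t) / t) := by field_simp; ring
  rw [F₁, symmetrize_apply, hq', ht', zpow_add_one₀ hq, zpow_add_one₀ ht]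
  field_simp
  ring

theorem F₂_eq_symmetrize (a b : ℤ) : F₂ a b = symmetrize (H₂ a b) := rfl

theorem F₃_eq_symmetrize (a b c : ℤ) : F₃ a b c = symmetrize (H₃ a b c) := rfl

section Expansion

variable {x y : K}

theorem zpow_mul_H₂ (hx : x ≠ 0) (hy : y ≠ 0) (a b c : ℤ) :
    (x * y) ^ c * H₂ (a + c) (b - c) x y
      = x ^ (a + 2 * b) * y ^ c / (1 - y / x ^ 2) + x ^ (a + 2 * c) * y ^ b / (1 - x ^ 2 / y) := by
  have hfst : (x * y) ^ c * x ^ (a + c + 2 * (b - c)) = x ^ (a + 2 * b) * y ^ c := by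
    rw [mul_zpow, mul_right_comm, ← zpow_add₀ hx]
    ring_nf
  have hsnd : (x * y) ^ c * (x ^ (a + c) * y ^ (b - c)) = x ^ (a + 2 * c) * y ^ b := by
    rw [mul_zpow, mul_mul_mul_comm, ← zpow_add₀ hx, ← zpow_add₀ hy]
    ring_nf
  rw [H₂, mul_add, mul_div_assoc', mul_div_assoc', hfst, hsnd]

theorem H₃_sub_H₃_shift (hx : x ≠ 0) (hy : y ≠ 0) (hxy : x ≠ y) (hxy₃ : x ^ 3 ≠ y) (a b c : ℤ) :
    H₃ a b c x y - H₃ (a + 1) (b + 1) (c - 1) x y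
      = x ^ (a + 2 * b) * y ^ c / (1 - y / x ^ 2)
        + x ^ (a + 2 * c) * y ^ b * (1 - y) / ((1 - y ^ 2 / x ^ 2) * (1 - x ^ 2 / y))
        + x ^ a * y ^ (b + 2 * c) / (1 - x ^ 2 / y ^ 2) := by
  have hsummand₁ : x ^ (a + 1 + 2 * (b + 1) + 3 * (c - 1)) = x ^ (a + 2 * b + 3 * c) := by ring_nf
  have hsummand₂ : x ^ (a + 1 + 2 * (b + 1)) * y ^ (c - 1)
      = x ^ (a + 2 * b) * y ^ c * (x ^ 3 / y) := by
    rw [zpow_sub_one₀ hy, show a + 1 + 2 * (b + 1) = a + 2 * b + (3 : ℕ) by push_cast; ring,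
      zpow_add₀ hx, zpow_natCast]
    ring
  have hsummand₃ : x ^ (a + 1 + 2 * (c - 1)) * y ^ (b + 1) * (1 - y)
      = x ^ (a + 2 * c) * y ^ b * (1 - y) * (y / x) := by
    rw [zpow_add_one₀ hy, show a + 1 + 2 * (c - 1) = a + 2 * c - 1 by ring, zpow_sub_one₀ hx]
    ring
  have hsummand₄ : x ^ (a + 1) * y ^ (b + 1 + 2 * (c - 1))
      = x ^ a * y ^ (b + 2 * c) * (x / y) := by
    rw [zpow_add_one₀ hx, show b + 1 + 2 * (c - 1) = b + 2 * c - 1 by ring, zpow_sub_one₀ hy]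
    ring
  have hsummand₅ : x ^ (a + 1 + (c - 1)) * y ^ (b + 1 + (c - 1)) = x ^ (a + c) * y ^ (b + c) := by
    ring_nf
  have hratio₂ : x ^ 3 / y ≠ 1 := by rwa [Ne, div_eq_one_iff_eq hy]
  have hratio₃ : y / x ≠ 1 := by rwa [Ne, div_eq_one_iff_eq hx, eq_comm]
  have hratio₄ : x / y ≠ 1 := by rwa [Ne, div_eq_one_iff_eq hy]
  rw [H₃, H₃, hsummand₁, hsummand₂, hsummand₃, hsummand₄, hsummand₅]
  linear_combination
    div_mul_one_sub_sub_mul_div hratio₂ (x ^ (a + 2 * b) * y ^ c) (1 - y / x ^ 2)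
    + div_mul_one_sub_sub_mul_div hratio₃ (x ^ (a + 2 * c) * y ^ b * (1 - y))
      ((1 - y ^ 2 / x ^ 2) * (1 - x ^ 2 / y))
    + div_mul_one_sub_sub_mul_div hratio₄ (x ^ a * y ^ (b + 2 * c)) (1 - x ^ 2 / y ^ 2)

theorem H₃_recursion (hx : x ≠ 0) (hy : y ≠ 0) (hxy : x ^ 2 ≠ y ^ 2) (hxy₂ : x ^ 2 ≠ y)
    (hxy₃ : x ^ 3 ≠ y) (a b : ℤ) {c : ℤ} (hc : 0 ≤ c) :
    H₃ a b c x y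
      = H₃ (a + 1) (b + 1) (c - 1) x y
        + (x * y) ^ c * H₂ (a + c) (b - c) x y
        + ∑ i ∈ Icc 0 (c - 1),
            (x * y) ^ (b + 2 * c - 2 * i) * x ^ (a - b - 2 * c + 4 * i) := by
  have hne : x ≠ y := fun h ↦ hxy (h ▸ rfl)
  rw [sum_Icc_mul_zpow_mul_zpow hx hy hxy a b hc, zpow_mul_H₂ hx hy]
  linear_combination H₃_sub_H₃_shift hx hy hne hxy₃ a b c
    + x ^ (a + 2 * c) * y ^ b * one_sub_div_mul_sub_one_div hx hy hxy₂ hxy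

end Expansion

theorem F₃_recursion (a b c : ℤ) (hc : 0 ≤ c) :
    F₃ a b c
      = F₃ (a + 1) (b + 1) (c - 1)
        + (q * t) ^ c * F₂ (a + c) (b - c)
        + ∑ i ∈ Finset.Icc (0 : ℤ) (c - 1),
            (q * t) ^ (b + 2 * c - 2 * i) * F₁ (a - b - 2 * c + 4 * i) := by
  let expansion : K → K → K := H₃ (a + 1) (b + 1) (c - 1)
    + (fun x y ↦ (x * y) ^ c * H₂ (a + c) (b - c) x y)
    + ∑ i ∈ Icc 0 (c - 1), fun x y ↦ (x * y) ^ (b + 2 * c - 2 * i) * x ^ (a - b - 2 * c + 4 * i)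
  have hqt : H₃ a b c q t = expansion q t := by
    simpa [expansion] using H₃_recursion q_ne_zero t_ne_zero (q_pow_ne_t_pow two_ne_zero 2)
      (by simpa using q_pow_ne_t_pow two_ne_zero 1)
      (by simpa using q_pow_ne_t_pow three_ne_zero 1) a b hc
  have htq : H₃ a b c t q = expansion t q := by
    simpa [expansion] using H₃_recursion t_ne_zero q_ne_zero (q_pow_ne_t_pow two_ne_zero 2).symm
      (by simpa using (q_pow_ne_t_pow one_ne_zero 2).symm)
      (by simpa using (q_pow_ne_t_pow one_ne_zero 3).symm) a b hc
  calc F₃ a b c = symmetrize expansion := by rw [F₃, hqt, htq, symmetrize_apply]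
    _ = _ := by
      simp only [expansion, map_add, map_sum, symmetrize_zpow_mul, F₁_eq_symmetrize,
        F₂_eq_symmetrize, F₃_eq_symmetrize]
end
end

section
/- Let a, b, c be nonnegative integers with a+1 ≥ b, a+1 ≥ c and b+1 ≥ c. Then in ℚ(q,t): F₃(a,b,c) = ∑_λ q^{area(λ)} t^{stat(λ)}, the sum running over all partitions λ = (x,y,z) with x ≥ y ≥ z ≥ 0, x ≤ a+b+c, y ≤ b+c and z ≤ c. -/
open Finset

noncomputable section

/-- `⌈m/2⌉` for an integer `m`, computed as `⌊(m+1)/2⌋`. -/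
def ceilHalf (m : ℤ) : ℤ := Int.fdiv (m + 1) 2

/-- The Finset of all subpartitions `(x,y,z)` of `λ(a,b,c) = (a+b+c, b+c, c)`. -/
def subparts (a b c : ℤ) : Finset (ℤ × ℤ × ℤ) :=
  ((Finset.Icc 0 (a + b + c)) ×ˢ (Finset.Icc 0 (b + c)) ×ˢ (Finset.Icc 0 c)).filter
    (fun w => w.2.1 ≤ w.1 ∧ w.2.2 ≤ w.2.1)

/-- The `t`-statistic of a subpartition `(x,y,z)` of `λ(a,b,c)`, defined by cases. -/
def statFn (a b c x y z : ℤ) : ℤ :=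
  if z < min (b + c - x) (ceilHalf (y - a)) then
    -- Case 2
    y + z
  else if x + y - z + 2 * max 0 (y + z - b - c) < a + b + c then
    -- Case 1(a)
    x + max (max 0 (ceilHalf (y - a)))
        (max (y + z - b - c) (ceilHalf (2 * y + z - (a + b + c))))
  else if y + z < b + c then
    -- Case 1(b)(i)
    -(a + b + c) + 2 * x + y - z + max 0 (ceilHalf ((a + b + c) + z - x - a))
  else
    -- Case 1(b)(ii)
    2 * x + 3 * y + z - (a + 3 * b + 3 * c)
      + max (max 0 (ceilHalf (2 * b + 2 * c - x - y))) (a + 2 * b + 2 * c - x - 2 * y)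

/-!
Multiplying by `q - t` turns the Schur polynomial `q ^ h * t ^ m + ⋯ + q ^ m * t ^ h` into the
alternant `q ^ (h + 1) * t ^ m - q ^ m * t ^ (h + 1)`, so both sides become sums of alternants.

For `F₃`, the fractions in `H₃` are the endpoint contributions of finite geometric sums: `H₃` is a
sum of monomials `q ^ h * t ^ m`, and `(q - t) * F₃` is the sum of the corresponding alternants.
Some of these have `h < m`; since alternants are antisymmetric, such terms cancel against others,
and what is left is indexed by `chainIndex`.

For the sum over subpartitions, `subparts a b c` is cut into chains along which `area` drops by one
and `stat` rises by one at each step. The weights along a chain add up to a Schur polynomial, whose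
alternant depends only on the bottom and the top of the chain.
-/

theorem sum_Ico_add_sum_Ico {α M : Type*} [LinearOrder α] [LocallyFiniteOrder α]
    [AddCommMonoid M] (f : α → M) {i j l : α} (hij : i ≤ j) (hjl : j ≤ l) :
    ∑ m ∈ Ico i j, f m + ∑ m ∈ Ico j l, f m = ∑ m ∈ Ico i l, f m := by
  rw [← sum_union (Ico_disjoint_Ico_consecutive i j l), Ico_union_Ico_eq_Ico hij hjl]

theorem sum_Ico_int_eq_sub {G : Type*} [AddCommGroup G] {f g : ℤ → G} {i j : ℤ} (hij : i ≤ j)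
    (hfg : ∀ l, i ≤ l → l < j → f l = g l - g (l + 1)) : ∑ l ∈ Ico i j, f l = g i - g j := by
  induction j, hij using Int.leInduction with
  | base => simp
  | succ j hij ih =>
    rw [← insert_Ico_right_eq_Ico_add_one hij, sum_insert right_notMem_Ico,
      ih fun l hil hlj => hfg l hil (by lia), hfg j hij (by lia)]
    abel

theorem sub_mul_sum_eq_of_chains {ι R : Type*} [CommRing R] {s : Finset ι} {bottom top : ι → Prop}
    [DecidablePred bottom] [DecidablePred top] {next prev : ι → ι} (u v : R) (w : ι → R)
    (next_mem : ∀ p ∈ s, ¬ top p → next p ∈ s ∧ ¬ bottom (next p))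
    (prev_mem : ∀ p ∈ s, ¬ bottom p → prev p ∈ s ∧ ¬ top (prev p))
    (prev_next : ∀ p ∈ s, ¬ top p → prev (next p) = p)
    (next_prev : ∀ p ∈ s, ¬ bottom p → next (prev p) = p)
    (hw : ∀ p ∈ s, ¬ top p → v * w p = u * w (next p)) :
    (u - v) * ∑ p ∈ s, w p = ∑ p ∈ s with bottom p, u * w p - ∑ p ∈ s with top p, v * w p := by
  have hshift : ∑ p ∈ s with ¬ top p, v * w p = ∑ p ∈ s with ¬ bottom p, u * w p := by
    refine sum_nbij' next prev ?_ ?_ ?_ ?_ ?_ <;> intro p hp <;> rw [mem_filter] at hp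
    · exact mem_filter.mpr (next_mem p hp.1 hp.2)
    · exact mem_filter.mpr (prev_mem p hp.1 hp.2)
    · exact prev_next p hp.1 hp.2
    · exact next_prev p hp.1 hp.2
    · exact hw p hp.1 hp.2
  rw [sub_mul, mul_sum, mul_sum, ← sum_filter_add_sum_filter_not s bottom (u * w ·),
    ← sum_filter_add_sum_filter_not s top (v * w ·), hshift, add_sub_add_right_eq_sub]

/-! ### `F₃` as a sum of alternants -/

section Geometric

variable {k : Type*} [Field k] {f : ℤ → k} {r : k} {i j : ℤ}

theorem sum_Ico_geom (hij : i ≤ j) (hr : r ≠ 1) (hf : ∀ l, f (l + 1) = r * f l) :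
    ∑ l ∈ Ico i j, f l = (f i - f j) / (1 - r) := by
  have hr' : 1 - r ≠ 0 := sub_ne_zero.mpr hr.symm
  rw [sub_div]
  refine sum_Ico_int_eq_sub (g := fun l => f l / (1 - r)) hij fun l _ _ => ?_
  rw [hf]
  field_simp

theorem sum_Ico_add_one_geom (hij : i ≤ j + 1) (hr₀ : r ≠ 0) (hr : r ≠ 1)
    (hf : ∀ l, f (l + 1) = r * f l) :
    ∑ l ∈ Ico i (j + 1), f l = f i / (1 - r) + f j / (1 - r⁻¹) := by
  have h₁ : 1 - r ≠ 0 := sub_ne_zero.mpr hr.symm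
  have h₂ : r - 1 ≠ 0 := sub_ne_zero.mpr hr
  rw [sum_Ico_geom hij hr hf, hf]
  field_simp
  ring

theorem sum_Ico_zpow_mul_zpow {u v : k} (hu : u ≠ 0) (hv : v ≠ 0) {i j : ℕ}
    (hij : u ^ i ≠ v ^ j) (m n : ℤ) {e : ℤ} (he : 0 ≤ e + 1) :
    ∑ l ∈ Ico 0 (e + 1), u ^ (m + i * l) * v ^ (n - j * l)
      = u ^ m * v ^ n / (1 - u ^ i / v ^ j)
        + u ^ (m + i * e) * v ^ (n - j * e) / (1 - v ^ j / u ^ i) := by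
  have hvj := pow_ne_zero j hv
  rw [sum_Ico_add_one_geom (r := u ^ i / v ^ j) he (div_ne_zero (pow_ne_zero i hu) hvj), inv_div]
  · simp only [mul_zero, sub_zero, add_zero]
  · rwa [Ne, div_eq_one_iff_eq hvj]
  · intro l
    rw [mul_add_one (i : ℤ), mul_add_one (j : ℤ), ← sub_sub, ← add_assoc, zpow_sub₀ hv,
      zpow_add₀ hu, zpow_natCast, zpow_natCast]
    ring

end Geometric

/-- The exponent `h` in the Schur polynomial `u ^ h * v ^ m + u ^ (h - 1) * v ^ (m + 1) + ⋯`,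
ending with `u ^ m * v ^ h`, contributed by the chain of subpartitions with index `(z, m)`. -/
def topExponent (a b c z m : ℤ) : ℤ :=
  a + b + 2 * c - m + max 0 (b + c - m - z)

section HighestWeights

variable {k : Type*} [Field k] {a b c z : ℤ} {u v : k}

theorem sum_Ico_topExponent_of_two_mul_le (hu : u ≠ 0) (hv : v ≠ 0) (h₂₁ : u ^ 2 ≠ v)
    (hz : 2 * z ≤ b + c) :
    ∑ m ∈ Ico z (b + c - z), u ^ topExponent a b c z m * v ^ m
      = (v ^ z * u ^ (a + 2 * b + 3 * c - 3 * z) - u ^ (a + c + z) * v ^ (b + c - z))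
          / (1 - v / u ^ 2) := by
  have hT : ∀ m ∈ Ico z (b + c - z), u ^ topExponent a b c z m * v ^ m
      = u ^ (a + 2 * b + 3 * c - z - 2 * m) * v ^ m := fun m hm => by
    have := (mem_Ico.mp hm).2
    rw [topExponent, show a + b + 2 * c - m + max 0 (b + c - m - z)
      = a + 2 * b + 3 * c - z - 2 * m by lia]
  rw [sum_congr rfl hT, sum_Ico_geom (r := v / u ^ 2) (by lia)]
  · ring_nf
  · rwa [Ne, div_eq_one_iff_eq (by positivity), eq_comm]
  · intro m
    rw [mul_add_one (2 : ℤ), ← sub_sub, zpow_sub₀ hu, zpow_add_one₀ hv]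
    norm_cast
    ring

theorem sum_Ico_topExponent_of_le (hu : u ≠ 0) (hv : v ≠ 0) (h₁₁ : u ≠ v) (hz : z ≤ c + 1) :
    ∑ m ∈ Ico (b + c - z) (b + 2 * c - 2 * z + 1), u ^ topExponent a b c z m * v ^ m
      = u ^ (a + c + z) * v ^ (b + c - z) / (1 - v / u)
        + u ^ (a + 2 * z) * v ^ (b + 2 * c - 2 * z) / (1 - u / v) := by
  have hT : ∀ m ∈ Ico (b + c - z) (b + 2 * c - 2 * z + 1), u ^ topExponent a b c z m * v ^ m
      = u ^ (a + b + 2 * c - m) * v ^ m := fun m hm => by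
    have := (mem_Ico.mp hm).1
    rw [topExponent, max_eq_left (by lia), add_zero]
  rw [sum_congr rfl hT, sum_Ico_add_one_geom (r := v / u) (by lia) (div_ne_zero hv hu), inv_div]
  · ring_nf
  · rwa [Ne, div_eq_one_iff_eq hu, eq_comm]
  · intro m
    rw [← sub_sub, zpow_sub_one₀ hu, zpow_add_one₀ hv]
    ring

theorem inv_one_sub_div_sub_inv_one_sub_div_sq (hu : u ≠ 0) (hv : v ≠ 0) (h₁₁ : u ≠ v)
    (h₂₁ : u ^ 2 ≠ v) :
    (1 - v / u)⁻¹ - (1 - v / u ^ 2)⁻¹ = (1 - u) / ((1 - u ^ 2 / v) * (1 - v / u)) := by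
  have d₁₁ : u - v ≠ 0 := sub_ne_zero.mpr h₁₁
  have d₂₁ : u ^ 2 - v ≠ 0 := sub_ne_zero.mpr h₂₁
  rw [show 1 - u ^ 2 / v = -(u ^ 2 - v) / v by field_simp; ring]
  field_simp
  ring

theorem inv_one_sub_div_sub_div_add (hu : u ≠ 0) (hv : v ≠ 0) (h₂₁ : u ^ 2 ≠ v)
    (h₂₂ : u ^ 2 ≠ v ^ 2) :
    ((1 - v / u)⁻¹ - (1 - v / u ^ 2)⁻¹) / (1 - v / u)
        + 1 / ((1 - v ^ 2 / u ^ 2) * (1 - u / v))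
      = (1 - v) / ((1 - v ^ 2 / u ^ 2) * (1 - u ^ 2 / v) * (1 - v / u)) := by
  have h₁₁ : u ≠ v := fun h => h₂₂ (by rw [h])
  have d₁₁ : u - v ≠ 0 := sub_ne_zero.mpr h₁₁
  have d₂₁ : u ^ 2 - v ≠ 0 := sub_ne_zero.mpr h₂₁
  have d₂₂ : u ^ 2 - v ^ 2 ≠ 0 := sub_ne_zero.mpr h₂₂
  rw [inv_one_sub_div_sub_inv_one_sub_div_sq hu hv h₁₁ h₂₁,
    show 1 - u ^ 2 / v = -(u ^ 2 - v) / v by field_simp; ring,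
    show 1 - u / v = -(u - v) / v by field_simp; ring]
  field_simp
  ring

theorem H₃_eq_sum_div {u v : K} (hu : u ≠ 0) (hv : v ≠ 0) (h₂₁ : u ^ 2 ≠ v) (h₃₁ : u ^ 3 ≠ v)
    (h₂₂ : u ^ 2 ≠ v ^ 2) (hc : 0 ≤ c + 1) :
    H₃ a b c u v
      = ∑ z ∈ Ico 0 (c + 1),
          ((v ^ z * u ^ (a + 2 * b + 3 * c - 3 * z) - u ^ (a + c + z) * v ^ (b + c - z))
              / (1 - v / u ^ 2)
            + (u ^ (a + c + z) * v ^ (b + c - z) / (1 - v / u)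
              + u ^ (a + 2 * z) * v ^ (b + 2 * c - 2 * z) / (1 - u / v))) := by
  have h₁₁ : u ≠ v := fun h => h₂₂ (by rw [h])
  have sum₁₁ := sum_Ico_zpow_mul_zpow hu hv (i := 1) (j := 1)
    (by rwa [pow_one, pow_one]) (a + c) (b + c) hc
  have sum₂₂ := sum_Ico_zpow_mul_zpow hu hv h₂₂ a (b + 2 * c) hc
  have sum₁₃ := sum_Ico_zpow_mul_zpow hv hu (i := 1) (j := 3)
    (by rwa [pow_one, ne_comm]) 0 (a + 2 * b + 3 * c) hc
  simp only [Nat.cast_ofNat, Nat.cast_one, one_mul, zero_add, zpow_zero, pow_one,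
    add_sub_cancel_right, add_assoc a c c, ← two_mul] at sum₁₁ sum₂₂ sum₁₃
  -- the endpoint terms of these sums that share a monomial merge by the next two identities
  have hmerge := inv_one_sub_div_sub_inv_one_sub_div_sq hu hv h₁₁ h₂₁
  have hmerge' := inv_one_sub_div_sub_div_add hu hv h₂₁ h₂₂
  simp only [sum_add_distrib, ← sum_div, sum_sub_distrib, sum₁₁, sum₂₂, sum₁₃, H₃]
  simp only [← div_div] at hmerge hmerge' ⊢
  generalize 1 - v / u = r₁₁ at *
  linear_combination -(u ^ (a + 2 * c) * v ^ b * hmerge')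
    - u ^ (a + c) * v ^ (b + c) / (1 - u / v) * hmerge

theorem H₃_eq_sum_topExponent {u v : K} (hu : u ≠ 0) (hv : v ≠ 0) (h₂₁ : u ^ 2 ≠ v)
    (h₃₁ : u ^ 3 ≠ v) (h₂₂ : u ^ 2 ≠ v ^ 2) (hc : 0 ≤ c + 1) (hbc : c ≤ b + 1) :
    H₃ a b c u v = ∑ z ∈ Ico 0 (min b c + 1), ∑ m ∈ Ico z (b + 2 * c - 2 * z + 1),
      u ^ topExponent a b c z m * v ^ m := by
  have h₁₁ : u ≠ v := fun h => h₂₂ (by rw [h])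
  rw [H₃_eq_sum_div hu hv h₂₁ h₃₁ h₂₂ hc]
  refine (sum_subset_zero_on_sdiff (Ico_subset_Ico_right (by lia)) (fun z hz => ?_)
    fun z hz => ?_).symm
  · -- for `c = b + 1` the surplus summand `z = c` vanishes
    obtain ⟨rfl, rfl⟩ : z = c ∧ c = b + 1 := by simp only [mem_sdiff, mem_Ico] at hz; lia
    have d₁₁ : u - v ≠ 0 := sub_ne_zero.mpr h₁₁
    have d₂₁ : u ^ 2 - v ≠ 0 := sub_ne_zero.mpr h₂₁
    rw [show a + 2 * b + 3 * (b + 1) - 3 * (b + 1) = a + 2 * b by ring,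
      show a + (b + 1) + (b + 1) = a + 2 * b + 2 by ring, show b + (b + 1) - (b + 1) = b by ring,
      show a + 2 * (b + 1) = a + 2 * b + 2 by ring,
      show b + 2 * (b + 1) - 2 * (b + 1) = b by ring, zpow_add₀ hu (a + 2 * b) 2, zpow_add_one₀ hv,
      show 1 - u / v = -(u - v) / v by field_simp; ring]
    field_simp
    ring
  · rw [mem_Ico] at hz
    have h₁ : z ≤ b + c - z := by lia
    have h₂ : b + c - z ≤ b + 2 * c - 2 * z + 1 := by lia
    rw [← sum_Ico_add_sum_Ico _ h₁ h₂,
      sum_Ico_topExponent_of_two_mul_le hu hv h₂₁ (by lia),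
      sum_Ico_topExponent_of_le hu hv h₁₁ (by lia)]

end HighestWeights

theorem q_pow_ne_t_pow_s13 {i j : ℕ} (hij : i ≠ 0 ∨ j ≠ 0) : q ^ i ≠ t ^ j := by
  intro hqt
  simp only [q, t, ← map_pow] at hqt
  have hX := IsFractionRing.injective (MvPolynomial (Fin 2) ℚ) K hqt
  rcases hij with hi | hj
  · simpa [hi, eq_comm] using congrArg (MvPolynomial.eval ![0, 1]) hX
  · simpa [hj] using congrArg (MvPolynomial.eval ![1, 0]) hX

theorem q_ne_t : q ≠ t := by
  simpa only [pow_one] using q_pow_ne_t_pow_s13 (i := 1) (j := 1) (.inl one_ne_zero)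

/-- The `2 × 2` alternant `u ^ i * v ^ j - u ^ j * v ^ i`, the numerator of a two-variable Schur
polynomial. -/
def alternant {k : Type*} [DivisionRing k] (u v : k) (i j : ℤ) : k :=
  u ^ i * v ^ j - u ^ j * v ^ i

theorem sub_mul_F₃ (a b c : ℤ) :
    (q - t) * F₃ a b c = q * H₃ a b c q t - t * H₃ a b c t q := by
  have hq := q_ne_zero
  have ht := t_ne_zero
  have hqt := sub_ne_zero.mpr q_ne_t
  have htq := sub_ne_zero.mpr q_ne_t.symm
  rw [F₃]
  field_simp
  ring

theorem sub_mul_F₃_eq_sum_alternant {a b c : ℤ} (hc : 0 ≤ c + 1) (hbc : c ≤ b + 1) :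
    (q - t) * F₃ a b c = ∑ z ∈ Ico 0 (min b c + 1), ∑ m ∈ Ico z (b + 2 * c - 2 * z + 1),
      alternant q t (topExponent a b c z m + 1) m := by
  have h₂₁ : q ^ 2 ≠ t := by simpa only [pow_one] using q_pow_ne_t_pow_s13 (j := 1) (.inl two_ne_zero)
  have h₃₁ : q ^ 3 ≠ t := by simpa only [pow_one] using q_pow_ne_t_pow_s13 (j := 1) (.inl three_ne_zero)
  have h₁₂ : q ≠ t ^ 2 := by simpa only [pow_one] using q_pow_ne_t_pow_s13 (i := 1) (.inr two_ne_zero)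
  have h₁₃ : q ≠ t ^ 3 := by simpa only [pow_one] using q_pow_ne_t_pow_s13 (i := 1) (.inr three_ne_zero)
  have h₂₂ : q ^ 2 ≠ t ^ 2 := q_pow_ne_t_pow_s13 (.inl two_ne_zero)
  rw [sub_mul_F₃, H₃_eq_sum_topExponent q_ne_zero t_ne_zero h₂₁ h₃₁ h₂₂ hc hbc,
    H₃_eq_sum_topExponent t_ne_zero q_ne_zero h₁₂.symm h₁₃.symm h₂₂.symm hc hbc]
  simp only [mul_sum, ← sum_sub_distrib]
  refine sum_congr rfl fun z _ => sum_congr rfl fun m _ => ?_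
  rw [alternant, zpow_add_one₀ q_ne_zero, zpow_add_one₀ t_ne_zero]
  ring

section Folding

variable {k : Type*} [Field k] {u v : k} {a b c : ℤ}

/-- The potential whose differences are the alternants of total degree `n - 1`; it is invariant
under `m ↦ n - m`. -/
def foldPotential (u v : k) (n m : ℤ) : k :=
  (u ^ (n - m) * v ^ m + u ^ m * v ^ (n - m)) / (u - v)

theorem foldPotential_sub (u v : k) (n m : ℤ) :
    foldPotential u v n (n - m) = foldPotential u v n m := by
  rw [foldPotential, foldPotential, sub_sub_cancel, add_comm]

theorem sum_Ico_alternant (hu : u ≠ 0) (hv : v ≠ 0) (huv : u ≠ v) (n : ℤ) {i j : ℤ}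
    (hij : i ≤ j) :
    ∑ m ∈ Ico i j, alternant u v (n - m) m
      = foldPotential u v (n + 1) i - foldPotential u v (n + 1) j := by
  refine sum_Ico_int_eq_sub hij fun m _ _ => ?_
  rw [foldPotential, foldPotential, ← sub_div, eq_div_iff (sub_ne_zero.mpr huv), alternant,
    add_sub_add_right_eq_sub, show n + 1 - m = n - m + 1 by ring]
  simp only [zpow_add_one₀ hu, zpow_add_one₀ hv]
  ring

/-- The permutation of `{0, …, n - 1}`, for `d ≤ n`, that re-pairs the values of `foldPotential`
left over by telescoping: with `d = b + c - a`, the value at `b + c - foldIndex d z` is matched with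
the one at `a + 2 * z + 1`. They cancel if `2 * z < d`, and otherwise bound an interval of
alternants that are numerators of genuine Schur polynomials. -/
def foldIndex (d z : ℤ) : ℤ :=
  if 2 * z < d then d - 2 * z - 1 else min z (2 * z - d)

theorem sum_Ico_foldIndex {M : Type*} [AddCommMonoid M] (f : ℤ → M) {d n : ℤ} (hd : d ≤ n) :
    ∑ z ∈ Ico 0 n, f (foldIndex d z) = ∑ z ∈ Ico 0 n, f z := by
  refine sum_nbij' (foldIndex d)
    (fun w => if d ≤ w then w else if 2 ∣ w - d then (w + d) / 2 else (d - 1 - w) / 2)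
    ?_ ?_ ?_ ?_ fun _ _ => rfl
  all_goals intro z hz; rw [mem_Ico] at hz; simp only [foldIndex, mem_Ico]; split_ifs <;> omega

theorem alternant_topExponent_of_le {z m : ℤ} (hm : b + c - z ≤ m) :
    alternant u v (topExponent a b c z m + 1) m = alternant u v (a + b + 2 * c + 1 - m) m := by
  rw [topExponent, max_eq_left (by lia)]
  ring_nf

theorem sum_Ico_alternant_topExponent (hu : u ≠ 0) (hv : v ≠ 0) (huv : u ≠ v) {z : ℤ}
    (hz : z ≤ c + 1) :
    ∑ m ∈ Ico (b + c - z) (b + 2 * c - 2 * z + 1), alternant u v (topExponent a b c z m + 1) m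
      = foldPotential u v (a + b + 2 * c + 2) (b + c - z)
        - foldPotential u v (a + b + 2 * c + 2) (a + 2 * z + 1) := by
  rw [sum_congr rfl fun m hm => alternant_topExponent_of_le (mem_Ico.mp hm).1,
    sum_Ico_alternant hu hv huv _ (by lia), ← foldPotential_sub _ _ _ (b + 2 * c - 2 * z + 1)]
  ring_nf

theorem sum_Ico_alternant_topExponent_fold (hu : u ≠ 0) (hv : v ≠ 0) (huv : u ≠ v)
    (hab : b ≤ a + 1) {z : ℤ} (hz₀ : 0 ≤ z) (hz : z ≤ c + 1) :
    ∑ m ∈ Ico (max (b + c - z) (2 * b + 2 * c - a - 2 * z))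
          (min (a + 2 * z) (b + 2 * c - 2 * z) + 1),
        alternant u v (topExponent a b c z m + 1) m
      = foldPotential u v (a + b + 2 * c + 2) (b + c - foldIndex (b + c - a) z)
        - foldPotential u v (a + b + 2 * c + 2) (a + 2 * z + 1) := by
  rw [foldIndex]
  split_ifs with hzd
  · rw [Ico_eq_empty_of_le (by lia), sum_empty, eq_comm, sub_eq_zero]
    ring_nf
  have hright : foldPotential u v (a + b + 2 * c + 2) (min (a + 2 * z) (b + 2 * c - 2 * z) + 1)
      = foldPotential u v (a + b + 2 * c + 2) (a + 2 * z + 1) := by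
    rcases min_choice (a + 2 * z) (b + 2 * c - 2 * z) with h | h <;> rw [h]
    rw [← foldPotential_sub]
    ring_nf
  rw [sum_congr rfl fun m hm => alternant_topExponent_of_le (by have := mem_Ico.mp hm; lia),
    sum_Ico_alternant hu hv huv _ (by lia), add_assoc _ (1 : ℤ) 1, one_add_one_eq_two, hright,
    show b + c - min z (2 * z - (b + c - a))
      = max (b + c - z) (2 * b + 2 * c - a - 2 * z) by lia]

/-- The indices `(z, m)` of the chains of subpartitions. The chain with index `(z, m)` has `stat`
equal to `m` at its bottom and `area` equal to `m` at its top; the two intervals for `m` come from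
the unfolded and the folded alternants. -/
def chainIndex (a b c : ℤ) : Finset (Σ _ : ℤ, ℤ) :=
  (Ico 0 (min b c + 1)).sigma fun z =>
    Ico z (b + c - z) ∪
      Ico (max (b + c - z) (2 * b + 2 * c - a - 2 * z)) (min (a + 2 * z) (b + 2 * c - 2 * z) + 1)

theorem sum_chainIndex {M : Type*} [AddCommMonoid M] (a b c : ℤ) (f : (Σ _ : ℤ, ℤ) → M) :
    ∑ g ∈ chainIndex a b c, f g
      = ∑ z ∈ Ico 0 (min b c + 1), (∑ m ∈ Ico z (b + c - z), f ⟨z, m⟩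
        + ∑ m ∈ Ico (max (b + c - z) (2 * b + 2 * c - a - 2 * z))
            (min (a + 2 * z) (b + 2 * c - 2 * z) + 1), f ⟨z, m⟩) := by
  rw [chainIndex, sum_sigma]
  refine sum_congr rfl fun z _ => sum_union <| disjoint_left.mpr fun m hm hm' => ?_
  rw [mem_Ico] at hm hm'
  lia

theorem sum_alternant_eq_sum_chainIndex (hu : u ≠ 0) (hv : v ≠ 0) (huv : u ≠ v)
    (hab : b ≤ a + 1) (hac : c ≤ a + 1) :
    ∑ z ∈ Ico 0 (min b c + 1), ∑ m ∈ Ico z (b + 2 * c - 2 * z + 1),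
        alternant u v (topExponent a b c z m + 1) m
      = ∑ g ∈ chainIndex a b c, alternant u v (topExponent a b c g.1 g.2 + 1) g.2 := by
  have hsplit (z : ℤ) (hz : z ∈ Ico 0 (min b c + 1)) :
      ∑ m ∈ Ico z (b + 2 * c - 2 * z + 1), alternant u v (topExponent a b c z m + 1) m
        = ∑ m ∈ Ico z (b + c - z), alternant u v (topExponent a b c z m + 1) m
          + (foldPotential u v (a + b + 2 * c + 2) (b + c - z)
            - foldPotential u v (a + b + 2 * c + 2) (a + 2 * z + 1)) := by
    rw [mem_Ico] at hz
    have h₁ : z ≤ b + c - z := by lia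
    have h₂ : b + c - z ≤ b + 2 * c - 2 * z + 1 := by lia
    rw [← sum_Ico_add_sum_Ico _ h₁ h₂, sum_Ico_alternant_topExponent hu hv huv (by lia)]
  have hfold (z : ℤ) (hz : z ∈ Ico 0 (min b c + 1)) :=
    sum_Ico_alternant_topExponent_fold hu hv huv hab (mem_Ico.mp hz).1
      (show z ≤ c + 1 by have := (mem_Ico.mp hz).2; lia)
  have hperm := sum_Ico_foldIndex (fun z => foldPotential u v (a + b + 2 * c + 2) (b + c - z))
    (show b + c - a ≤ min b c + 1 by lia)
  rw [sum_chainIndex, sum_congr rfl hsplit]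
  simp only [sum_add_distrib, sum_congr rfl hfold, sum_sub_distrib, hperm]

end Folding

/-! ### Chains of subpartitions -/

theorem ceilHalf_eq (m : ℤ) : ceilHalf m = (m + 1) / 2 := by
  rw [ceilHalf, Int.fdiv_eq_ediv_of_nonneg _ zero_le_two]

theorem mem_subparts {a b c x y z : ℤ} :
    (x, y, z) ∈ subparts a b c
      ↔ 0 ≤ z ∧ z ≤ y ∧ y ≤ x ∧ x ≤ a + b + c ∧ y ≤ b + c ∧ z ≤ c := by
  simp only [subparts, mem_filter, mem_product, mem_Icc]
  lia

/-- The next subpartition in a chain. It gains a cell in a row dictated by the case of `statFn` that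
applies; if case 2 admits no further cell, the chain moves to a subpartition of the form
`(w, w, n - w)` outside case 2, still with one more cell. -/
def nextInChain (a b c : ℤ) : ℤ × ℤ × ℤ → ℤ × ℤ × ℤ
  | (x, y, z) =>
    if z < min (b + c - x) (ceilHalf (y - a)) then
      if z + 1 < min (b + c - x) (ceilHalf (y - a)) then (x, y, z + 1)
      else
        let n := x + ceilHalf (y - a)
        let w := y - max 0 (n - (b + c))
        (w, w, n - w)
    else if x + y - z + 2 * max 0 (y + z - b - c) < a + b + c then (x + 1, y, z)
    else if y + z < b + c then (x, y + 1, z)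
    else (x, y, z + 1)

/-- The previous subpartition in a chain, inverse to `nextInChain`. -/
def prevInChain (a b c : ℤ) : ℤ × ℤ × ℤ → ℤ × ℤ × ℤ
  | (x, y, z) =>
    if z < min (b + c - x) (ceilHalf (y - a)) then (x, y, z - 1)
    else if a + b + c < x + y - z + 2 * max 0 (y + z - b - c) then
      if y + z ≤ b + c then (x, y - 1, z) else (x, y, z - 1)
    else if y < x then (x - 1, y, z)
    else
      let w := y + max 0 (y + z - b - c)
      let n := ceilHalf (w - a)
      (y + z - n, w, min (b + c - (y + z - n)) n - 1)

/-- The subpartitions at which a chain starts: those without a predecessor in `subparts`. -/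
def IsChainBottom (a b c : ℤ) : ℤ × ℤ × ℤ → Prop
  | (x, y, z) =>
    (z = 0 ∧ a < y ∧ x < b + c) ∨
    (x = y ∧ x + y - z + 2 * max 0 (y + z - b - c) ≤ a + b + c ∧
      (y + max 0 (y + z - b - c) ≤ a ∨ b + c ≤ a + z))

/-- The subpartitions at which a chain ends: those without a successor in `subparts`. -/
def IsChainTop (a b c : ℤ) : ℤ × ℤ × ℤ → Prop
  | (x, y, z) => z = c ∧ b ≤ y ∧ a + 3 * b + 2 * c ≤ x + 3 * y

instance (a b c : ℤ) : DecidablePred (IsChainBottom a b c) :=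
  fun _ => inferInstanceAs (Decidable (_ ∨ _))

instance (a b c : ℤ) : DecidablePred (IsChainTop a b c) :=
  fun _ => inferInstanceAs (Decidable (_ ∧ _))

section Chains

variable {a b c : ℤ} {p : ℤ × ℤ × ℤ}

theorem nextInChain_mem (hb : 0 ≤ b) (hc : 0 ≤ c) (hab : b ≤ a + 1) (hac : c ≤ a + 1)
    (hbc : c ≤ b + 1) (hp : p ∈ subparts a b c) (htop : ¬ IsChainTop a b c p) :
    nextInChain a b c p ∈ subparts a b c ∧ ¬ IsChainBottom a b c (nextInChain a b c p) := by
  obtain ⟨x, y, z⟩ := p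
  simp only [mem_subparts, IsChainTop] at hp htop
  simp only [nextInChain, ceilHalf_eq]
  split_ifs <;> simp only [mem_subparts, IsChainBottom] <;> constructor <;> omega

theorem prevInChain_mem (ha : 0 ≤ a) (hc : 0 ≤ c) (hab : b ≤ a + 1)
    (hp : p ∈ subparts a b c) (hbot : ¬ IsChainBottom a b c p) :
    prevInChain a b c p ∈ subparts a b c ∧ ¬ IsChainTop a b c (prevInChain a b c p) := by
  obtain ⟨x, y, z⟩ := p
  simp only [mem_subparts, IsChainBottom] at hp hbot
  simp only [prevInChain, ceilHalf_eq]
  split_ifs <;> simp only [mem_subparts, IsChainTop] <;> constructor <;> omega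

theorem prevInChain_nextInChain (hp : p ∈ subparts a b c) (htop : ¬ IsChainTop a b c p) :
    prevInChain a b c (nextInChain a b c p) = p := by
  obtain ⟨x, y, z⟩ := p
  simp only [mem_subparts, IsChainTop] at hp htop
  simp only [nextInChain, ceilHalf_eq]
  split_ifs <;> simp only [prevInChain, ceilHalf_eq] <;> split_ifs <;>
    simp only [Prod.mk.injEq, true_and, and_true] <;> omega

theorem nextInChain_prevInChain (hp : p ∈ subparts a b c) (hbot : ¬ IsChainBottom a b c p) :
    nextInChain a b c (prevInChain a b c p) = p := by
  obtain ⟨x, y, z⟩ := p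
  simp only [mem_subparts, IsChainBottom] at hp hbot
  simp only [prevInChain, ceilHalf_eq]
  split_ifs <;> simp only [nextInChain, ceilHalf_eq] <;> split_ifs <;>
    simp only [Prod.mk.injEq, true_and, and_true] <;> omega

end Chains

/-- The exponent of `q` in the weight of a subpartition: the number of cells of
`(a + b + c, b + c, c)` outside it. -/
def area (a b c : ℤ) : ℤ × ℤ × ℤ → ℤ
  | (x, y, z) => a + 2 * b + 3 * c - (x + y + z)

theorem area_nextInChain (a b c : ℤ) (p : ℤ × ℤ × ℤ) :
    area a b c (nextInChain a b c p) = area a b c p - 1 := by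
  obtain ⟨x, y, z⟩ := p
  simp only [nextInChain]
  split_ifs <;> simp only [area] <;> lia

section Statistic

variable {a b c x y z : ℤ}

theorem statFn_case2 (hz : z < min (b + c - x) (ceilHalf (y - a))) :
    statFn a b c x y z = y + z :=
  if_pos hz

theorem statFn_case1a_of_lt (h₁ : min (b + c - x) (ceilHalf (y - a)) ≤ z)
    (hyz : y + z < b + c) (hL : x + y - z < a + b + c) :
    statFn a b c x y z = x + max 0 (ceilHalf (y - a)) := by
  rw [statFn, if_neg h₁.not_gt, if_pos (by lia)]
  simp only [ceilHalf_eq] at *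
  omega

theorem statFn_case1a_of_le (hyx : y ≤ x) (hyz : b + c ≤ y + z)
    (hL : x + 3 * y + z < a + 3 * b + 3 * c) :
    statFn a b c x y z = x + max (y + z - b - c) (ceilHalf (2 * y + z - (a + b + c))) := by
  rw [statFn, if_neg (by lia), if_pos (by lia)]
  simp only [ceilHalf_eq] at *
  omega

theorem statFn_case1bi (h₁ : min (b + c - x) (ceilHalf (y - a)) ≤ z)
    (hyz : y + z < b + c) (hL : a + b + c ≤ x + y - z) :
    statFn a b c x y z = -(a + b + c) + 2 * x + y - z + max 0 (ceilHalf (b + c + z - x)) := by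
  rw [statFn, if_neg h₁.not_gt, if_neg (by lia), if_pos hyz]
  ring_nf

theorem statFn_case1bii (hyx : y ≤ x) (hyz : b + c ≤ y + z)
    (hL : a + 3 * b + 3 * c ≤ x + 3 * y + z) :
    statFn a b c x y z = 2 * x + 3 * y + z - (a + 3 * b + 3 * c)
      + max (max 0 (ceilHalf (2 * b + 2 * c - x - y))) (a + 2 * b + 2 * c - x - 2 * y) := by
  rw [statFn, if_neg (by lia), if_neg (by lia), if_neg hyz.not_gt]

theorem statFn_add_one_left (hyx : y ≤ x)
    (h₁ : min (b + c - x) (ceilHalf (y - a)) ≤ z)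
    (hL : x + y - z + 2 * max 0 (y + z - b - c) < a + b + c) :
    statFn a b c (x + 1) y z = statFn a b c x y z + 1 := by
  rcases lt_or_ge (y + z) (b + c) with hyz | hyz
  · rw [statFn_case1a_of_lt (x := x) h₁ hyz (by lia)]
    rcases lt_or_ge (x + 1 + y - z) (a + b + c) with hL' | hL'
    · rw [statFn_case1a_of_lt (by lia) hyz hL']
      ring
    · rw [statFn_case1bi (by lia) hyz hL']
      simp only [ceilHalf_eq] at *
      omega
  · rw [statFn_case1a_of_le (x := x) hyx hyz (by lia)]
    rcases lt_or_ge (x + 1 + 3 * y + z) (a + 3 * b + 3 * c) with hL' | hL'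
    · rw [statFn_case1a_of_le (by lia) hyz hL']
      ring
    · rw [statFn_case1bii (by lia) hyz hL']
      simp only [ceilHalf_eq] at *
      omega

theorem statFn_add_one_mid (hyx : y < x)
    (h₁ : min (b + c - x) (ceilHalf (y - a)) ≤ z)
    (hyz : y + z < b + c) (hL : a + b + c ≤ x + y - z) :
    statFn a b c x (y + 1) z = statFn a b c x y z + 1 := by
  rw [statFn_case1bi (y := y) h₁ hyz hL]
  rcases lt_or_ge (y + 1 + z) (b + c) with hyz' | hyz'
  · rw [statFn_case1bi (by simp only [ceilHalf_eq] at *; omega) hyz' (by lia)]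
    ring
  rcases lt_or_ge (x + 3 * (y + 1) + z) (a + 3 * b + 3 * c) with hL' | hL'
  · rw [statFn_case1a_of_le (by lia) hyz' hL']
    simp only [ceilHalf_eq] at *
    omega
  · rw [statFn_case1bii (by lia) hyz' hL']
    simp only [ceilHalf_eq] at *
    omega

theorem statFn_add_one_right_of_le (hyx : y ≤ x) (hyz : b + c ≤ y + z)
    (hL : a + 3 * b + 3 * c ≤ x + 3 * y + z) :
    statFn a b c x y (z + 1) = statFn a b c x y z + 1 := by
  rw [statFn_case1bii hyx (by lia) (by lia), statFn_case1bii hyx hyz hL]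
  ring

theorem statFn_of_leave_case2 {n w : ℤ} (hn : n = x + ceilHalf (y - a))
    (hw : w = y - max 0 (n - (b + c))) (hp : (x, y, z) ∈ subparts a b c)
    (h₂ : z < min (b + c - x) (ceilHalf (y - a)))
    (h₂' : min (b + c - x) (ceilHalf (y - a)) ≤ z + 1) :
    statFn a b c w w (n - w) = y + z + 1 := by
  rw [mem_subparts] at hp
  rcases lt_or_ge n (b + c) with hyz | hyz
  · obtain rfl : w = y := by lia
    rcases lt_or_ge (w + w - (n - w)) (a + b + c) with hL | hL
    · rw [statFn_case1a_of_lt (by simp only [ceilHalf_eq] at *; omega) (by lia) hL]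
      simp only [ceilHalf_eq] at *
      omega
    · rw [statFn_case1bi (by simp only [ceilHalf_eq] at *; omega) (by lia) hL]
      simp only [ceilHalf_eq] at *
      omega
  · rcases lt_or_ge (w + 3 * w + (n - w)) (a + 3 * b + 3 * c) with hL | hL
    · rw [statFn_case1a_of_le le_rfl (by lia) hL]
      simp only [ceilHalf_eq] at *
      omega
    · rw [statFn_case1bii le_rfl (by lia) hL]
      simp only [ceilHalf_eq] at *
      omega

/-- The exponent of `t` in the weight of a subpartition. -/
def stat (a b c : ℤ) : ℤ × ℤ × ℤ → ℤ
  | (x, y, z) => statFn a b c x y z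

theorem stat_nextInChain {p : ℤ × ℤ × ℤ} (hb : 0 ≤ b) (hc : 0 ≤ c)
    (hab : b ≤ a + 1) (hac : c ≤ a + 1) (hbc : c ≤ b + 1)
    (hp : p ∈ subparts a b c) (htop : ¬ IsChainTop a b c p) :
    stat a b c (nextInChain a b c p) = stat a b c p + 1 := by
  have hmem := (nextInChain_mem hb hc hab hac hbc hp htop).1
  obtain ⟨x, y, z⟩ := p
  have hp' := mem_subparts.mp hp
  simp only [nextInChain] at hmem ⊢
  split_ifs at hmem ⊢ with h₂ h₂' hL hyz <;> simp only [stat] <;> rw [mem_subparts] at hmem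
  · rw [statFn_case2 h₂, statFn_case2 h₂']
    ring
  · rw [statFn_case2 h₂]
    exact statFn_of_leave_case2 rfl rfl hp h₂ (not_lt.mp h₂')
  · exact statFn_add_one_left (by lia) (not_lt.mp h₂) hL
  · exact statFn_add_one_mid (by lia) (not_lt.mp h₂) hyz (by lia)
  · exact statFn_add_one_right_of_le (by lia) (not_lt.mp hyz) (by lia)

end Statistic

theorem mem_chainIndex {a b c z m : ℤ} :
    ⟨z, m⟩ ∈ chainIndex a b c ↔ 0 ≤ z ∧ z ≤ b ∧ z ≤ c ∧
      (z ≤ m ∧ m + z < b + c ∨ b + c ≤ m + z ∧ 2 * b + 2 * c ≤ a + 2 * z + m ∧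
        m ≤ a + 2 * z ∧ m ≤ b + 2 * c - 2 * z) := by
  simp only [chainIndex, mem_sigma, mem_union, mem_Ico]
  lia

/-- The lowest subpartition of the chain with index `(z, m)`. -/
def chainBottom (a b c : ℤ) : (Σ _ : ℤ, ℤ) → ℤ × ℤ × ℤ
  | ⟨z, m⟩ =>
    if b + c ≤ m + z then (b + c - z, b + c - z, m + 2 * z - (b + c))
    else if a < m then (m + z, m, 0)
    else (m, m, z)

/-- The highest subpartition of the chain with index `(z, m)`. -/
def chainTop (a b c : ℤ) : (Σ _ : ℤ, ℤ) → ℤ × ℤ × ℤ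
  | ⟨z, m⟩ =>
    let d := if b + c ≤ m + z then z else z + max 0 (ceilHalf (m - a))
    (a + b + c + d - m, b + c - d, c)

theorem area_chainBottom {a b c z m : ℤ} :
    area a b c (chainBottom a b c ⟨z, m⟩) = topExponent a b c z m := by
  simp only [chainBottom]
  split_ifs <;> simp only [area, topExponent] <;> lia

theorem area_chainTop {a b c z m : ℤ} :
    area a b c (chainTop a b c ⟨z, m⟩) = m := by
  simp only [chainTop, area]
  lia

theorem stat_chainBottom {a b c z m : ℤ} (hg : ⟨z, m⟩ ∈ chainIndex a b c) :
    stat a b c (chainBottom a b c ⟨z, m⟩) = m := by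
  rw [mem_chainIndex] at hg
  simp only [chainBottom]
  split_ifs with hm ham <;> simp only [stat]
  · rcases lt_or_ge (b + c - z + 3 * (b + c - z) + (m + 2 * z - (b + c))) (a + 3 * b + 3 * c)
      with hL | hL
    · rw [statFn_case1a_of_le le_rfl (by lia) hL]
      simp only [ceilHalf_eq]
      omega
    · rw [statFn_case1bii le_rfl (by lia) hL]
      simp only [ceilHalf_eq]
      omega
  · rw [statFn_case2 (by simp only [ceilHalf_eq]; omega), add_zero]
  · have h₁ : min (b + c - m) (ceilHalf (m - a)) ≤ z := by simp only [ceilHalf_eq]; omega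
    rcases lt_or_ge (m + m - z) (a + b + c) with hL | hL
    · rw [statFn_case1a_of_lt h₁ (by lia) hL]
      simp only [ceilHalf_eq]
      omega
    · rw [statFn_case1bi h₁ (by lia) hL]
      simp only [ceilHalf_eq]
      omega

theorem stat_chainTop {a b c z m : ℤ} (hab : b ≤ a + 1) (hg : ⟨z, m⟩ ∈ chainIndex a b c) :
    stat a b c (chainTop a b c ⟨z, m⟩) = topExponent a b c z m := by
  rw [mem_chainIndex] at hg
  simp only [chainTop, stat, topExponent, ceilHalf_eq]
  split_ifs <;> rw [statFn_case1bii (by omega) (by omega) (by omega), ceilHalf_eq] <;> omega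

theorem sum_filter_isChainBottom {M : Type*} [AddCommMonoid M] {a b c : ℤ}
    (ha : 0 ≤ a) (hc : 0 ≤ c) (hab : b ≤ a + 1) (hac : c ≤ a + 1) (hbc : c ≤ b + 1)
    (f : ℤ × ℤ × ℤ → M) :
    ∑ p ∈ subparts a b c with IsChainBottom a b c p, f p
      = ∑ g ∈ chainIndex a b c, f (chainBottom a b c g) := by
  refine (sum_nbij' (chainBottom a b c)
    (fun (x, y, z) => if y + z < b + c then ⟨x - y + z, y⟩ else ⟨b + c - y, 2 * y + z - (b + c)⟩)
    ?_ ?_ ?_ ?_ fun _ _ => rfl).symm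
  · rintro ⟨z, m⟩ hg
    rw [mem_chainIndex] at hg
    simp only [chainBottom]
    split_ifs <;> rw [mem_filter, mem_subparts] <;> simp only [IsChainBottom, true_and] <;> omega
  · rintro ⟨x, y, z⟩ hp
    rw [mem_filter, mem_subparts] at hp
    simp only [IsChainBottom] at hp
    dsimp only
    split_ifs <;> rw [mem_chainIndex] <;> omega
  · rintro ⟨z, m⟩ hg
    rw [mem_chainIndex] at hg
    simp only [chainBottom]
    split_ifs <;> simp only [Sigma.mk.injEq, heq_eq_eq, and_true] <;> omega
  · rintro ⟨x, y, z⟩ hp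
    rw [mem_filter, mem_subparts] at hp
    simp only [IsChainBottom] at hp
    dsimp only
    split_ifs <;> simp only [chainBottom] <;> split_ifs <;>
      simp only [Prod.mk.injEq, true_and] <;> omega

theorem sum_filter_isChainTop {M : Type*} [AddCommMonoid M] {a b c : ℤ}
    (hc : 0 ≤ c) (hab : b ≤ a + 1) (hac : c ≤ a + 1) (f : ℤ × ℤ × ℤ → M) :
    ∑ p ∈ subparts a b c with IsChainTop a b c p, f p
      = ∑ g ∈ chainIndex a b c, f (chainTop a b c g) := by
  refine (sum_nbij' (chainTop a b c)
    (fun (x, y, _) =>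
      let m := a + 2 * b + 2 * c - x - y
      let d := b + c - y
      if b + c ≤ d - max 0 (ceilHalf (m - a)) + m then ⟨d, m⟩
      else ⟨d - max 0 (ceilHalf (m - a)), m⟩)
    ?_ ?_ ?_ ?_ fun _ _ => rfl).symm
  · rintro ⟨z, m⟩ hg
    rw [mem_chainIndex] at hg
    rw [chainTop, mem_filter, mem_subparts]
    simp only [IsChainTop, true_and, ceilHalf_eq]
    omega
  · rintro ⟨x, y, z⟩ hp
    rw [mem_filter, mem_subparts] at hp
    simp only [IsChainTop] at hp
    simp only [ceilHalf_eq]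
    split_ifs <;> rw [mem_chainIndex] <;> omega
  · rintro ⟨z, m⟩ hg
    rw [mem_chainIndex] at hg
    simp only [chainTop, ceilHalf_eq]
    split_ifs <;> simp only [Sigma.mk.injEq, heq_eq_eq] <;> omega
  · rintro ⟨x, y, z⟩ hp
    rw [mem_filter, mem_subparts] at hp
    simp only [IsChainTop] at hp
    simp only [ceilHalf_eq]
    split_ifs <;> simp only [chainTop, ceilHalf_eq] <;> split_ifs <;>
      simp only [Prod.mk.injEq] <;> omega

theorem sub_mul_sum_weight {k : Type*} [Field k] {u v : k} {a b c : ℤ} (hu : u ≠ 0) (hv : v ≠ 0)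
    (ha : 0 ≤ a) (hb : 0 ≤ b) (hc : 0 ≤ c)
    (hab : b ≤ a + 1) (hac : c ≤ a + 1) (hbc : c ≤ b + 1) :
    (u - v) * ∑ p ∈ subparts a b c, u ^ area a b c p * v ^ stat a b c p
      = ∑ g ∈ chainIndex a b c, alternant u v (topExponent a b c g.1 g.2 + 1) g.2 := by
  rw [sub_mul_sum_eq_of_chains u v _
      (fun _ => nextInChain_mem hb hc hab hac hbc) (fun _ => prevInChain_mem ha hc hab)
      (fun _ => prevInChain_nextInChain) (fun _ => nextInChain_prevInChain),
    sum_filter_isChainBottom ha hc hab hac hbc, sum_filter_isChainTop hc hab hac,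
    ← sum_sub_distrib]
  · refine sum_congr rfl fun ⟨z, m⟩ hg => ?_
    rw [area_chainBottom, area_chainTop, stat_chainBottom hg, stat_chainTop hab hg, alternant,
      zpow_add_one₀ hu, zpow_add_one₀ hv]
    ring
  · intro p hp htop
    rw [area_nextInChain, stat_nextInChain hb hc hab hac hbc hp htop, zpow_sub_one₀ hu,
      zpow_add_one₀ hv]
    field_simp

theorem F₃_combinatorial_formula (a b c : ℤ) (ha : 0 ≤ a) (hb : 0 ≤ b) (hc : 0 ≤ c)
    (hab : b ≤ a + 1) (hac : c ≤ a + 1) (hbc : c ≤ b + 1) :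
    F₃ a b c
      = ∑ w ∈ subparts a b c,
          q ^ (a + 2 * b + 3 * c - (w.1 + w.2.1 + w.2.2))
            * t ^ (statFn a b c w.1 w.2.1 w.2.2) := by
  refine mul_left_cancel₀ (sub_ne_zero.mpr q_ne_t) ?_
  calc (q - t) * F₃ a b c
      = ∑ z ∈ Ico 0 (min b c + 1), ∑ m ∈ Ico z (b + 2 * c - 2 * z + 1),
          alternant q t (topExponent a b c z m + 1) m :=
        sub_mul_F₃_eq_sum_alternant (by lia) hbc
    _ = ∑ g ∈ chainIndex a b c, alternant q t (topExponent a b c g.1 g.2 + 1) g.2 :=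
        sum_alternant_eq_sum_chainIndex q_ne_zero t_ne_zero q_ne_t hab hac
    _ = (q - t) * ∑ w ∈ subparts a b c, q ^ area a b c w * t ^ stat a b c w :=
        (sub_mul_sum_weight q_ne_zero t_ne_zero ha hb hc hab hac hbc).symm
end
end
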